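/- For every finite simple graph G and every vertex v of G, Max(G - v) ≥ Max(G) - 2 and Min(G - v) ≥ Min(G) - 2, where G - v is the induced subgraph obtained by deleting the vertex v. -/

import Mathlib

/-!
Write `M s` and `m s` for the values of the game on the remaining vertex set `s` with Max,
respectively Min, to move. Three facts carry the proof.

* Monotonicity: `M (s - v) ≤ M s` and `m (s - v) ≤ m s` (`gameValue_erase_le`).
* Comparison: `m s ≤ M s + 1`; Min plays any edge, and then `M` is monotone.
* The bound itself: `M s ≤ M (s - v) + 2` and `m s ≤ m (s - v) + 2`
  (`gameValue_le_erase_add_two`).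

All are inductions on `s` in which the player with an optimal move copies it to the other board.
For monotonicity, copying fails only when Min's optimal move on `s` is an edge `vy`. Then
`m s = 1 + M (s - v - y)`, and on `s - v` Min answers with an edge `yz` if there is one; otherwise
`y` is isolated in `s - v`, may be deleted without lowering the value, and the comparison applies.
For the bound, copying fails only when Max's optimal move on `s` is an edge `vy`. Then
`M s = 1 + m (s - v - y) ≤ 1 + m (s - v) ≤ 2 + M (s - v)` by monotonicity and comparison.
-/

open Finset

variable {V : Type*} [DecidableEq V]

/-- The legal moves in the matching game on `G` when the set of remaining
(undeleted) vertices is `s`: ordered pairs of adjacent remaining vertices. -/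
def matchPlays (G : SimpleGraph V) [DecidableRel G.Adj] (s : Finset V) :
    Finset (V × V) :=
  (s ×ˢ s).filter fun p => G.Adj p.1 p.2

lemma matchPlays_card {G : SimpleGraph V} [DecidableRel G.Adj] {s : Finset V}
    {p : V × V} (hp : p ∈ matchPlays G s) :
    (s \ {p.1, p.2}).card < s.card := by
  simp only [matchPlays, mem_filter, mem_product] at hp
  refine card_lt_card (Finset.sdiff_ssubset ?_ ⟨p.1, mem_insert_self _ _⟩)
  intro x hx
  rcases mem_insert.mp hx with h | h
  · exact h ▸ hp.1.1
  · exact (mem_singleton.mp h) ▸ hp.1.2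

/-- The value of the matching game on the subgraph of `G` induced by the vertex
set `s`, with Max to move if `maxTurn = true` and Min to move otherwise:
the number of *further* edges added to the matching under optimal play. -/
def gameValue (G : SimpleGraph V) [DecidableRel G.Adj] (maxTurn : Bool)
    (s : Finset V) : ℕ :=
  if h : (matchPlays G s).Nonempty then
    if maxTurn then
      (matchPlays G s).attach.sup
        fun p => 1 + gameValue G false (s \ {p.1.1, p.1.2})
    else
      (matchPlays G s).attach.inf' (by simpa using h)
        fun p => 1 + gameValue G true (s \ {p.1.1, p.1.2})
  else 0
termination_by s.card
decreasing_by
  · exact matchPlays_card p.2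
  · exact matchPlays_card p.2

/-- The Max-start game matching number `Max(G)`. -/
noncomputable def gameMax [Fintype V] (G : SimpleGraph V) : ℕ :=
  letI : DecidableRel G.Adj := Classical.decRel _
  gameValue G true Finset.univ

/-- The Min-start game matching number `Min(G)`. -/
noncomputable def gameMin [Fintype V] (G : SimpleGraph V) : ℕ :=
  letI : DecidableRel G.Adj := Classical.decRel _
  gameValue G false Finset.univ

/-- `M` is a matching in `G`: a set of edges of `G` that are pairwise
vertex-disjoint. -/
def IsMatchingSet (G : SimpleGraph V) (M : Finset (Sym2 V)) : Prop :=
  (∀ e ∈ M, e ∈ G.edgeSet) ∧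
    ∀ e ∈ M, ∀ f ∈ M, e ≠ f → ∀ v : V, v ∈ e → v ∉ f

/-- The matching number `α'(G)`: the maximum size of a matching in `G`. -/
noncomputable def matchingNumber (G : SimpleGraph V) : ℕ :=
  sSup {n | ∃ M : Finset (Sym2 V), IsMatchingSet G M ∧ M.card = n}

/-! ### Optimal moves -/

section Values

variable {G : SimpleGraph V} [DecidableRel G.Adj] {s : Finset V}

lemma mem_matchPlays {p : V × V} :
    p ∈ matchPlays G s ↔ p.1 ∈ s ∧ p.2 ∈ s ∧ G.Adj p.1 p.2 := by
  simp [matchPlays, and_assoc]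

lemma gameValue_of_empty (b : Bool) (h : ¬ (matchPlays G s).Nonempty) :
    gameValue G b s = 0 := by
  rw [gameValue, dif_neg h]

lemma le_gameValue_true {x y : V} (hx : x ∈ s) (hy : y ∈ s) (h : G.Adj x y) :
    1 + gameValue G false (s \ {x, y}) ≤ gameValue G true s := by
  have hp : (x, y) ∈ matchPlays G s := mem_matchPlays.2 ⟨hx, hy, h⟩
  rw [gameValue.eq_def G true s, dif_pos ⟨_, hp⟩, if_pos rfl]
  exact Finset.le_sup (f := fun p : {p // p ∈ matchPlays G s} =>
    1 + gameValue G false (s \ {p.1.1, p.1.2})) (Finset.mem_attach _ ⟨(x, y), hp⟩)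

lemma gameValue_false_le {x y : V} (hx : x ∈ s) (hy : y ∈ s) (h : G.Adj x y) :
    gameValue G false s ≤ 1 + gameValue G true (s \ {x, y}) := by
  have hp : (x, y) ∈ matchPlays G s := mem_matchPlays.2 ⟨hx, hy, h⟩
  rw [gameValue.eq_def G false s, dif_pos ⟨_, hp⟩, if_neg (by simp)]
  exact Finset.inf'_le (f := fun p : {p // p ∈ matchPlays G s} =>
    1 + gameValue G true (s \ {p.1.1, p.1.2})) (Finset.mem_attach _ ⟨(x, y), hp⟩)

/-- On a board with an edge, the player to move has an optimal move. -/
lemma exists_optimal (b : Bool) (h : (matchPlays G s).Nonempty) :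
    ∃ x ∈ s, ∃ y ∈ s, G.Adj x y ∧
      gameValue G b s = 1 + gameValue G (!b) (s \ {x, y}) := by
  have hne : (matchPlays G s).attach.Nonempty := by simpa using h
  cases b
  · obtain ⟨p, -, hp⟩ := Finset.exists_mem_eq_inf' hne
      (fun p : {p // p ∈ matchPlays G s} => 1 + gameValue G true (s \ {p.1.1, p.1.2}))
    obtain ⟨h1, h2, h3⟩ := mem_matchPlays.1 p.2
    refine ⟨_, h1, _, h2, h3, ?_⟩
    rw [gameValue.eq_def G false s, dif_pos h, if_neg (by simp)]
    exact hp
  · obtain ⟨p, -, hp⟩ := Finset.exists_mem_eq_sup _ hne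
      (fun p : {p // p ∈ matchPlays G s} => 1 + gameValue G false (s \ {p.1.1, p.1.2}))
    obtain ⟨h1, h2, h3⟩ := mem_matchPlays.1 p.2
    refine ⟨_, h1, _, h2, h3, ?_⟩
    rw [gameValue.eq_def G true s, dif_pos h, if_pos rfl]
    exact hp

/-- Either the game is over, or the player to move has an optimal move. -/
lemma gameValue_cases (G : SimpleGraph V) [DecidableRel G.Adj] (b : Bool) (s : Finset V) :
    ((∀ x ∈ s, ∀ y ∈ s, ¬ G.Adj x y) ∧ gameValue G b s = 0) ∨
    ∃ x ∈ s, ∃ y ∈ s, G.Adj x y ∧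
      gameValue G b s = 1 + gameValue G (!b) (s \ {x, y}) := by
  by_cases h : (matchPlays G s).Nonempty
  · exact Or.inr (exists_optimal b h)
  · exact Or.inl ⟨fun x hx y hy hxy => h ⟨(x, y), mem_matchPlays.2 ⟨hx, hy, hxy⟩⟩,
      gameValue_of_empty b h⟩


/-! ### Deleting a vertex -/

lemma erase_sdiff_pair (s : Finset V) (v x y : V) :
    s.erase v \ {x, y} = (s \ {x, y}).erase v := by
  grind

lemma card_sdiff_pair_lt {x : V} (hx : x ∈ s) (y : V) : (s \ {x, y}).card < s.card :=
  Finset.card_lt_card (by grind)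

/-- Deleting an isolated vertex does not lower the value. -/
lemma gameValue_le_erase_of_isolated (b : Bool) (s : Finset V) (y : V)
    (hy : ∀ z ∈ s, ¬ G.Adj y z) : gameValue G b s ≤ gameValue G b (s.erase y) := by
  induction hn : s.card using Nat.strong_induction_on generalizing b s with
  | _ n ih =>
    cases b
    · obtain ⟨h, h0⟩ | ⟨a, ha, c, hc, hac, he⟩ := gameValue_cases G false (s.erase y)
      · obtain ⟨-, h0'⟩ | ⟨a, ha, c, hc, hac, -⟩ := gameValue_cases G false s
        · omega
        · -- an edge of `s` avoids the isolated vertex, so it survives in `s.erase y`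
          have hca := hac.symm
          exact absurd hac (h a (by grind) c (by grind))
      · have ha' := Finset.mem_of_mem_erase ha
        have := gameValue_false_le ha' (Finset.mem_of_mem_erase hc) hac
        have := ih _ (hn ▸ card_sdiff_pair_lt ha' c) true (s \ {a, c})
          (fun z hz => hy z (Finset.mem_sdiff.1 hz).1) rfl
        rw [erase_sdiff_pair] at he
        simp only [Bool.not_false] at he
        omega
    · obtain ⟨-, h0⟩ | ⟨a, ha, c, hc, hac, he⟩ := gameValue_cases G true s
      · omega
      · have hca := hac.symm
        have := le_gameValue_true (s := s.erase y) (x := a) (y := c) (by grind) (by grind) hac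
        have := ih _ (hn ▸ card_sdiff_pair_lt ha c) false (s \ {a, c})
          (fun z hz => hy z (Finset.mem_sdiff.1 hz).1) rfl
        rw [erase_sdiff_pair] at *
        simp only [Bool.not_true] at he
        omega

/-- `m s ≤ M s + 1`, given that `M` is monotone below `s`. -/
lemma false_le_true_add_one_of_mono
    (hM : ∀ t ⊆ s, ∀ v, gameValue G true (t.erase v) ≤ gameValue G true t) :
    gameValue G false s ≤ gameValue G true s + 1 := by
  obtain ⟨-, h0⟩ | ⟨x, hx, y, hy, hxy, he⟩ := gameValue_cases G false s
  · omega
  · have h1 := hM s subset_rfl x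
    have h2 := hM (s.erase x) (Finset.erase_subset _ _) y
    have h3 : s \ {x, y} = (s.erase x).erase y := by grind
    rw [h3] at he
    simp only [Bool.not_false] at he
    omega

/-- Deleting a vertex does not raise the value. -/
lemma gameValue_erase_le (b : Bool) (s : Finset V) (v : V) :
    gameValue G b (s.erase v) ≤ gameValue G b s := by
  induction hn : s.card using Nat.strong_induction_on generalizing b s v with
  | _ n ih =>
    by_cases hv : v ∈ s
    swap
    · rw [Finset.erase_eq_of_notMem hv]
    cases b
    · obtain ⟨h, h0⟩ | ⟨x, hx, y, hy, hxy, he⟩ := gameValue_cases G false s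
      · obtain ⟨-, h0'⟩ | ⟨a, ha, c, hc, hac, -⟩ := gameValue_cases G false (s.erase v)
        · omega
        · exact absurd hac (h a (Finset.mem_of_mem_erase ha) c (Finset.mem_of_mem_erase hc))
      · simp only [Bool.not_false] at he
        by_cases hvxy : x ≠ v ∧ y ≠ v
        · have h1 := gameValue_false_le (Finset.mem_erase.2 ⟨hvxy.1, hx⟩)
            (Finset.mem_erase.2 ⟨hvxy.2, hy⟩) hxy
          have h2 := ih _ (hn ▸ card_sdiff_pair_lt hx y) true (s \ {x, y}) v rfl
          rw [erase_sdiff_pair] at h1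
          omega
        · -- Min's optimal move on `s` is the edge `vw`.
          obtain ⟨w, hw, hvw, hs⟩ : ∃ w ∈ s, w ≠ v ∧ s \ {x, y} = (s.erase v).erase w := by
            by_cases hxv : x = v
            · subst hxv
              exact ⟨y, hy, hxy.ne', by grind⟩
            · have hyv : y = v := by tauto
              subst hyv
              exact ⟨x, hx, hxy.ne, by grind⟩
          have hlt : (s.erase v).card < n := hn ▸ Finset.card_erase_lt_of_mem hv
          have hmono : ∀ t ⊆ s.erase v, ∀ u,
              gameValue G true (t.erase u) ≤ gameValue G true t := fun t ht u =>
            ih _ ((Finset.card_le_card ht).trans_lt hlt) true t u rfl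
          rw [hs] at he
          by_cases hiso : ∀ z ∈ s.erase v, ¬ G.Adj w z
          · have h1 := gameValue_le_erase_of_isolated true (s.erase v) w hiso
            have h2 := false_le_true_add_one_of_mono hmono
            omega
          · push Not at hiso
            obtain ⟨z, hz, hwz⟩ := hiso
            have h1 := gameValue_false_le (Finset.mem_erase.2 ⟨hvw, hw⟩) hz hwz
            have h2 := hmono ((s.erase v).erase w) (Finset.erase_subset _ _) z
            have h3 : s.erase v \ {w, z} = ((s.erase v).erase w).erase z := by grind
            rw [h3] at h1
            omega
    · obtain ⟨-, h0⟩ | ⟨x, hx, y, hy, hxy, he⟩ := gameValue_cases G true (s.erase v)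
      · omega
      · have hx' := Finset.mem_of_mem_erase hx
        have h1 := le_gameValue_true hx' (Finset.mem_of_mem_erase hy) hxy
        have h2 := ih _ (hn ▸ card_sdiff_pair_lt hx' y) false (s \ {x, y}) v rfl
        rw [erase_sdiff_pair] at he
        simp only [Bool.not_true] at he
        omega

/-- Deleting a vertex lowers the value by at most two. -/
lemma gameValue_le_erase_add_two (b : Bool) (s : Finset V) (v : V) :
    gameValue G b s ≤ gameValue G b (s.erase v) + 2 := by
  induction hn : s.card using Nat.strong_induction_on generalizing b s with
  | _ n ih =>
    cases b
    · obtain ⟨h, h0⟩ | ⟨x, hx, y, hy, hxy, he⟩ := gameValue_cases G false (s.erase v)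
      · obtain ⟨-, h0'⟩ | ⟨a, ha, c, hc, hac, he⟩ := gameValue_cases G false s
        · omega
        · -- every edge of `s` meets `v`, so nothing is left after the first move
          have hav : a = v ∨ c = v := by
            by_contra! hne
            exact h a (Finset.mem_erase.2 ⟨hne.1, ha⟩) c (Finset.mem_erase.2 ⟨hne.2, hc⟩) hac
          obtain ⟨-, h1⟩ | ⟨x, hx, y, hy, hxy, -⟩ := gameValue_cases G true (s \ {a, c})
          · simp only [Bool.not_false] at he
            omega
          · exact absurd hxy (h x (by grind) y (by grind))
      · have hx' := Finset.mem_of_mem_erase hx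
        have h1 := gameValue_false_le hx' (Finset.mem_of_mem_erase hy) hxy
        have h2 := ih _ (hn ▸ card_sdiff_pair_lt hx' y) true (s \ {x, y}) rfl
        rw [erase_sdiff_pair] at he
        simp only [Bool.not_false] at he
        omega
    · obtain ⟨-, h0⟩ | ⟨x, hx, y, hy, hxy, he⟩ := gameValue_cases G true s
      · omega
      · simp only [Bool.not_true] at he
        by_cases hvxy : x ≠ v ∧ y ≠ v
        · have h1 := le_gameValue_true (Finset.mem_erase.2 ⟨hvxy.1, hx⟩)
            (Finset.mem_erase.2 ⟨hvxy.2, hy⟩) hxy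
          have h2 := ih _ (hn ▸ card_sdiff_pair_lt hx y) false (s \ {x, y}) rfl
          rw [erase_sdiff_pair] at h1
          omega
        · -- Max's optimal move on `s` is the edge `vw`.
          obtain ⟨w, hs⟩ : ∃ w, s \ {x, y} = (s.erase v).erase w := by
            by_cases hxv : x = v
            · exact ⟨y, by grind⟩
            · exact ⟨x, by grind⟩
          rw [hs] at he
          have h1 := gameValue_erase_le (G := G) false (s.erase v) w
          have h2 := false_le_true_add_one_of_mono (G := G) (s := s.erase v)
            fun t _ u => gameValue_erase_le true t u
          omega

end Values

/-! ### Induced subgraphs -/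

/-- The game on an induced subgraph, presented as a graph on another vertex type, is the game on
the ambient graph restricted to the corresponding vertices. -/
lemma gameValue_map {W : Type*} [DecidableEq W] (H : SimpleGraph W) [DecidableRel H.Adj]
    (G : SimpleGraph V) [DecidableRel G.Adj] (f : W ↪ V)
    (hf : ∀ a b, H.Adj a b ↔ G.Adj (f a) (f b)) (b : Bool) (t : Finset W) :
    gameValue H b t = gameValue G b (t.map f) := by
  induction hn : t.card using Nat.strong_induction_on generalizing b t with
  | _ n ih =>
    have hmap (x y : W) : t.map f \ {f x, f y} = (t \ {x, y}).map f := by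
      ext a
      simp only [Finset.mem_sdiff, Finset.mem_map, Finset.mem_insert, Finset.mem_singleton]
      constructor
      · rintro ⟨⟨c, hc, rfl⟩, h⟩
        exact ⟨c, ⟨hc, fun h' => h (h'.imp (congrArg f) (congrArg f))⟩, rfl⟩
      · rintro ⟨c, ⟨hc, h⟩, rfl⟩
        exact ⟨⟨c, hc, rfl⟩, fun h' => h (h'.imp (fun e => f.injective e) fun e => f.injective e)⟩
    have hmem {x : W} (hx : x ∈ t) : f x ∈ t.map f := Finset.mem_map_of_mem f hx
    obtain ⟨h, h0⟩ | ⟨x, hx, y, hy, hxy, he⟩ := gameValue_cases H b t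
    · obtain ⟨-, h0'⟩ | ⟨a, ha, c, hc, hac, -⟩ := gameValue_cases G b (t.map f)
      · rw [h0, h0']
      · obtain ⟨a, ha', rfl⟩ := Finset.mem_map.1 ha
        obtain ⟨c, hc', rfl⟩ := Finset.mem_map.1 hc
        exact absurd ((hf a c).2 hac) (h a ha' c hc')
    · obtain ⟨h', -⟩ | ⟨a, ha, c, hc, hac, he'⟩ := gameValue_cases G b (t.map f)
      · exact absurd ((hf x y).1 hxy) (h' _ (hmem hx) _ (hmem hy))
      · obtain ⟨a, ha', rfl⟩ := Finset.mem_map.1 ha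
        obtain ⟨c, hc', rfl⟩ := Finset.mem_map.1 hc
        have i1 := ih _ (hn ▸ card_sdiff_pair_lt hx y) (!b) (t \ {x, y}) rfl
        have i2 := ih _ (hn ▸ card_sdiff_pair_lt ha' c) (!b) (t \ {a, c}) rfl
        rw [hmap] at he'
        cases b
        · have h1 := gameValue_false_le (hmem hx) (hmem hy) ((hf x y).1 hxy)
          have h2 := gameValue_false_le ha' hc' ((hf a c).2 hac)
          rw [hmap] at h1
          simp only [Bool.not_false] at *
          omega
        · have h1 := le_gameValue_true (hmem hx) (hmem hy) ((hf x y).1 hxy)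
          have h2 := le_gameValue_true ha' hc' ((hf a c).2 hac)
          rw [hmap] at h1
          simp only [Bool.not_true] at *
          omega

/-- deleting a vertex decreases `Max` and `Min` by at most `2`. -/
theorem stmt3 {V : Type*} [Fintype V] [DecidableEq V] (G : SimpleGraph V) (v : V) :
    (gameMax G : ℤ) - 2 ≤ gameMax (G.induce {u | u ≠ v}) ∧
    (gameMin G : ℤ) - 2 ≤ gameMin (G.induce {u | u ≠ v}) := by
  have hu : (Finset.univ : Finset {u : V | u ≠ v}).map (Function.Embedding.subtype _)
      = Finset.univ.erase v := by
    ext a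
    simp
  have key (b : Bool) [DecidableRel G.Adj] [DecidableRel (G.induce {u | u ≠ v}).Adj]
      [DecidableEq {u : V | u ≠ v}] :
      (gameValue G b Finset.univ : ℤ) - 2
        ≤ gameValue (G.induce {u | u ≠ v}) b Finset.univ := by
    have h := gameValue_le_erase_add_two (G := G) b Finset.univ v
    rw [gameValue_map _ G (Function.Embedding.subtype _) (fun _ _ => Iff.rfl), hu]
    omega
  unfold gameMax gameMin
  exact ⟨@key true (_) (_) (_), @key false (_) (_) (_)⟩
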